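/- Let λ(t):=λ₁(Γ_t) for t>−1. (a) For every L ≥ 0, if μ ∈ ℝ and 0 ≠ q ∈ H¹(L,∞) satisfy the Sturm–Liouville eigen-equation −q'' + λ q = μ q on (L,∞) with Neumann condition q'(L)=0, then μ > λ(L). (b) For every L > −1, the ground energy satisfies μ(L) ≤ λ₁(Γ), where μ(L):=inf{∫_L^∞(|q'(t)|²+λ(t)|q(t)|²)dt / ∫_L^∞|q(t)|²dt : 0≠q∈H¹(L,∞)}. -/

import Mathlib

/-!
Everything rests on two facts about `λ(t) = λ₁(Γ_t)`: it is nondecreasing on `[0,∞)`, and for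
each trial function of `λ₁(Γ)` with quotient `r` one has `λ(t) ≤ r` for all large `t`.

Monotonicity (`lamR_mono`): for `0 ≤ L ≤ t`, cut an admissible function on `Γ_t` along `Γ_L`.
Its restriction to `Γ_L` is admissible there, and on the two remaining arms, of width one with
Dirichlet conditions on the long sides, the Poincaré inequality bounds the energy below by `π²`
times the mass (`poincare_arm`). It remains to know `λ(L) ≤ π²` (`lamR_le_pi_sq`). The function
`sin (π (min x y + 1))` has Rayleigh quotient exactly `π²` on `Γ_L` (`integral_cos_GamR`); it is
not `C¹`, but it is the limit of the admissible functions `trial δ`.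

Part (a) (`eigenvalue_gt`): if `μ ≤ λ(L)`, then `q'' = (λ - μ) q` with `λ - μ ≥ 0`, so
`(q²)'' ≥ 0`; with `q'(L) = 0` the function `q²` is nondecreasing, and being integrable it vanishes.

Part (b) (`muSL_le_lamG`): a trial function of `λ₁(Γ)` with quotient `r` is admissible on all large
`Γ_t`, so `λ ≤ r` far out (`lamR_le_of_trial`); the one-dimensional problem is tested with a bump
of width `n` located there, whose kinetic energy is `O(n⁻²)` (`muSL_le_of_eventually_le`).
-/

noncomputable section
open MeasureTheory Set Real

/-- The interval `I = (-1,0)`. -/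
def II : Set ℝ := Set.Ioo (-1) 0

/-- The broken guide `Γ = {x ∈ ℝ² : -1 < min(x₁,x₂) < 0}`. -/
def Gam : Set (ℝ × ℝ) := {p | -1 < min p.1 p.2 ∧ min p.1 p.2 < 0}

/-- The box `□_L = {x : max(|x₁+1|,|x₂+1|) < L}`. -/
def Box (L : ℝ) : Set (ℝ × ℝ) := {p | |p.1 + 1| < L ∧ |p.2 + 1| < L}

/-- The finite guide `Γ_R = Γ ∩ □_{R+1}`. -/
def GamR (R : ℝ) : Set (ℝ × ℝ) := Gam ∩ Box (R + 1)

/-- The Neumann part `Σ_R = ∂Γ_R ∩ ∂□_{R+1}` of the boundary. -/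
def Sig (R : ℝ) : Set (ℝ × ℝ) := frontier (GamR R) ∩ frontier (Box (R + 1))

/-- The Dirichlet part `∂Γ_R ∖ Σ_R` of the boundary. -/
def DirB (R : ℝ) : Set (ℝ × ℝ) := frontier (GamR R) \ Sig R

/-- Squared gradient `|∇u|² = (∂₁u)² + (∂₂u)²`. -/
def gradSq2 (u : ℝ × ℝ → ℝ) (p : ℝ × ℝ) : ℝ :=
  (fderiv ℝ u p (1, 0)) ^ 2 + (fderiv ℝ u p (0, 1)) ^ 2

/-- Admissible functions for the mixed problem on `Γ_R`: `C¹` up to the boundary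
(modelled by a globally `C¹` extension) vanishing on the Dirichlet part. -/
def AdmR (R : ℝ) (u : ℝ × ℝ → ℝ) : Prop :=
  ContDiff ℝ 1 u ∧ ∀ p ∈ DirB R, u p = 0

/-- First Rayleigh quotient `λ₁(Γ_R)` of the mixed Dirichlet–Neumann Laplacian on `Γ_R`. -/
def lamR (R : ℝ) : ℝ :=
  sInf {r | ∃ u : ℝ × ℝ → ℝ, AdmR R u ∧ (∫ p in GamR R, (u p) ^ 2) ≠ 0 ∧
    r = (∫ p in GamR R, gradSq2 u p) / ∫ p in GamR R, (u p) ^ 2}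

/-- First Rayleigh quotient `λ₁(Γ)` of the Dirichlet Laplacian on the broken guide `Γ`. -/
def lamG : ℝ :=
  sInf {r | ∃ u : ℝ × ℝ → ℝ, ContDiff ℝ 1 u ∧ HasCompactSupport u ∧ tsupport u ⊆ Gam ∧
    (∫ p in Gam, (u p) ^ 2) ≠ 0 ∧
    r = (∫ p in Gam, gradSq2 u p) / ∫ p in Gam, (u p) ^ 2}

/-- `ω = √(π² − λ₁(Γ))`. -/
def omega : ℝ := Real.sqrt (π ^ 2 - lamG)

/-- Ground energy `μ(L)` of the Sturm–Liouville operator `q ↦ -q'' + λ q` on `(L,∞)`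
with Neumann condition at `L` and potential `λ(t) = λ₁(Γ_t)`, defined as the infimum of
Rayleigh quotients over (`C¹` representatives of) `H¹(L,∞)`. -/
def muSL (L : ℝ) : ℝ :=
  sInf {r | ∃ q : ℝ → ℝ, ContDiff ℝ 1 q ∧
    IntegrableOn (fun t => (q t) ^ 2) (Set.Ioi L) ∧
    IntegrableOn (fun t => (deriv q t) ^ 2) (Set.Ioi L) ∧
    (∫ t in Set.Ioi L, (q t) ^ 2) ≠ 0 ∧
    r = (∫ t in Set.Ioi L, ((deriv q t) ^ 2 + lamR t * (q t) ^ 2)) /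
      ∫ t in Set.Ioi L, (q t) ^ 2}

/-! ### Geometry of the finite guides -/

lemma isOpen_Gam : IsOpen Gam := by
  have h : Continuous fun p : ℝ × ℝ => min p.1 p.2 := continuous_fst.min continuous_snd
  exact (isOpen_lt continuous_const h).inter (isOpen_lt h continuous_const)

lemma isOpen_Box (L : ℝ) : IsOpen (Box L) := by
  have h1 : Continuous fun p : ℝ × ℝ => |p.1 + 1| := by fun_prop
  have h2 : Continuous fun p : ℝ × ℝ => |p.2 + 1| := by fun_prop
  exact (isOpen_lt h1 continuous_const).inter (isOpen_lt h2 continuous_const)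

lemma isOpen_GamR (R : ℝ) : IsOpen (GamR R) := isOpen_Gam.inter (isOpen_Box _)

lemma mem_GamR {R : ℝ} (hR : -1 < R) (p : ℝ × ℝ) :
    p ∈ GamR R ↔ -1 < p.1 ∧ p.1 < R ∧ -1 < p.2 ∧ p.2 < R ∧ (p.1 < 0 ∨ p.2 < 0) := by
  simp only [GamR, Gam, Box, mem_inter_iff, mem_ofPred_eq, lt_min_iff, min_lt_iff, abs_lt]
  constructor
  · rintro ⟨⟨⟨a, b⟩, c⟩, ⟨d, e⟩, f, g⟩
    exact ⟨a, by linarith, b, by linarith, c⟩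
  · rintro ⟨a, b, c, d, e⟩
    exact ⟨⟨⟨a, c⟩, e⟩, ⟨by linarith, by linarith⟩, by linarith, by linarith⟩

lemma Box_mono {L M : ℝ} (h : L ≤ M) : Box L ⊆ Box M :=
  fun _ hp => ⟨hp.1.trans_le h, hp.2.trans_le h⟩

lemma GamR_mono {L M : ℝ} (h : L ≤ M) : GamR L ⊆ GamR M :=
  inter_subset_inter_right _ (Box_mono (by linarith))

/-- The Dirichlet part consists of the points of `closure Γ_R` inside the open box that do not
belong to `Γ`. -/
lemma mem_DirB {R : ℝ} {p : ℝ × ℝ} :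
    p ∈ DirB R ↔ p ∈ closure (GamR R) ∧ p ∈ Box (R + 1) ∧ p ∉ Gam := by
  have hB : closure (GamR R) ⊆ closure (Box (R + 1)) := closure_mono inter_subset_right
  simp only [DirB, Sig, (isOpen_GamR R).frontier_eq, (isOpen_Box (R + 1)).frontier_eq, mem_sdiff,
    mem_inter_iff]
  constructor
  · rintro ⟨⟨h1, h2⟩, h3⟩
    have h4 : p ∈ Box (R + 1) := by
      by_contra h
      exact h3 ⟨⟨h1, h2⟩, hB h1, h⟩
    exact ⟨h1, h4, fun h => h2 ⟨h, h4⟩⟩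
  · rintro ⟨h1, h2, h3⟩
    exact ⟨⟨h1, fun h => h3 h.1⟩, fun h => h.2.2 h2⟩

lemma min_of_mem_DirB {R : ℝ} {p : ℝ × ℝ} (hp : p ∈ DirB R) :
    min p.1 p.2 = -1 ∨ min p.1 p.2 = 0 := by
  obtain ⟨h1, -, h3⟩ := mem_DirB.1 hp
  have h : Continuous fun p : ℝ × ℝ => min p.1 p.2 := continuous_fst.min continuous_snd
  have hc : IsClosed {p : ℝ × ℝ | -1 ≤ min p.1 p.2 ∧ min p.1 p.2 ≤ 0} :=
    (isClosed_le continuous_const h).inter (isClosed_le h continuous_const)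
  have hs : GamR R ⊆ {p : ℝ × ℝ | -1 ≤ min p.1 p.2 ∧ min p.1 p.2 ≤ 0} :=
    fun p hp => ⟨hp.1.1.le, hp.1.2.le⟩
  obtain ⟨h4, h5⟩ := closure_minimal hs hc h1
  by_contra! hcon
  exact h3 ⟨lt_of_le_of_ne h4 (Ne.symm hcon.1), lt_of_le_of_ne h5 hcon.2⟩

lemma DirB_mono {L M : ℝ} (h : L ≤ M) : DirB L ⊆ DirB M := by
  intro p hp
  obtain ⟨h1, h2, h3⟩ := mem_DirB.1 hp
  exact mem_DirB.2 ⟨closure_mono (GamR_mono h) h1, Box_mono (by linarith) h2, h3⟩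

lemma mem_DirB_horizontal {t x y : ℝ} (hx : 0 ≤ x) (hxt : x < t) (hy : y = -1 ∨ y = 0) :
    (x, y) ∈ DirB t := by
  refine mem_DirB.2 ⟨?_, ?_, ?_⟩
  · have hs : ({x} : Set ℝ) ×ˢ Ioo (-1 : ℝ) 0 ⊆ GamR t := by
      rintro ⟨a, b⟩ ⟨ha, hb⟩
      simp only [mem_singleton_iff, mem_Ioo] at ha hb
      subst ha
      exact (mem_GamR (by linarith) _).2 ⟨by simp; linarith, hxt, hb.1, by simp; linarith, Or.inr hb.2⟩
    apply closure_mono hs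
    rw [closure_prod_eq, closure_Ioo (by norm_num)]
    refine ⟨by simp, ?_⟩
    rcases hy with rfl | rfl <;> simp
  · simp only [Box, mem_ofPred_eq, abs_lt]
    rcases hy with rfl | rfl <;> refine ⟨⟨?_, ?_⟩, ?_, ?_⟩ <;> linarith
  · rintro ⟨h1, h2⟩
    simp only [lt_min_iff, min_lt_iff] at h1 h2
    rcases hy with rfl | rfl
    · linarith [h1.2]
    · rcases h2 with h2 | h2 <;> linarith

lemma swap_mem_GamR {R : ℝ} {p : ℝ × ℝ} : p.swap ∈ GamR R ↔ p ∈ GamR R := by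
  simp only [GamR, Gam, Box, mem_inter_iff, mem_ofPred_eq, Prod.fst_swap, Prod.snd_swap,
    min_comm p.2 p.1]
  tauto

lemma mem_DirB_vertical {t x y : ℝ} (hy : 0 ≤ y) (hyt : y < t) (hx : x = -1 ∨ x = 0) :
    (x, y) ∈ DirB t := by
  obtain ⟨h1, h2, h3⟩ := mem_DirB.1 (mem_DirB_horizontal hy hyt hx)
  refine mem_DirB.2 ⟨?_, ⟨h2.2, h2.1⟩, ?_⟩
  · have := image_closure_subset_closure_image (s := GamR t) continuous_swap
      (mem_image_of_mem Prod.swap h1)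
    refine closure_mono ?_ this
    rintro _ ⟨p, hp, rfl⟩
    exact swap_mem_GamR.2 hp
  · rintro ⟨h4, h5⟩
    exact h3 ⟨by simpa [min_comm] using h4, by rw [min_comm]; exact h5⟩

lemma GamR_subset_Icc {R : ℝ} (hR : -1 < R) : GamR R ⊆ Icc (-1 : ℝ) R ×ˢ Icc (-1 : ℝ) R := by
  intro p hp
  obtain ⟨a, b, c, d, -⟩ := (mem_GamR hR p).1 hp
  exact ⟨⟨a.le, b.le⟩, c.le, d.le⟩

lemma integrableOn_GamR {R : ℝ} (hR : -1 < R) {f : ℝ × ℝ → ℝ} (hf : Continuous f) :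
    IntegrableOn f (GamR R) :=
  (hf.continuousOn.integrableOn_compact (isCompact_Icc.prod isCompact_Icc)).mono_set
    (GamR_subset_Icc hR)

/-! ### Energy and mass integrals -/

lemma gradSq2_nonneg (u : ℝ × ℝ → ℝ) (p : ℝ × ℝ) : 0 ≤ gradSq2 u p := by
  unfold gradSq2; positivity

lemma continuous_gradSq2 {u : ℝ × ℝ → ℝ} (hu : ContDiff ℝ 1 u) : Continuous (gradSq2 u) := by
  have h := hu.continuous_fderiv one_ne_zero
  unfold gradSq2
  exact ((h.clm_apply continuous_const).pow 2).add ((h.clm_apply continuous_const).pow 2)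

lemma lamR_mem_nonneg {R r : ℝ} (h : ∃ u : ℝ × ℝ → ℝ, AdmR R u ∧ (∫ p in GamR R, (u p) ^ 2) ≠ 0 ∧
    r = (∫ p in GamR R, gradSq2 u p) / ∫ p in GamR R, (u p) ^ 2) : 0 ≤ r := by
  obtain ⟨u, -, -, rfl⟩ := h
  exact div_nonneg (integral_nonneg fun p => gradSq2_nonneg u p)
    (integral_nonneg fun p => sq_nonneg _)

lemma lamR_nonneg (R : ℝ) : 0 ≤ lamR R := Real.sInf_nonneg fun _ h => lamR_mem_nonneg h

lemma lamR_mul_le {R : ℝ} {u : ℝ × ℝ → ℝ} (hu : AdmR R u) :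
    lamR R * ∫ p in GamR R, (u p) ^ 2 ≤ ∫ p in GamR R, gradSq2 u p := by
  have h0 : 0 ≤ ∫ p in GamR R, (u p) ^ 2 := integral_nonneg fun p => sq_nonneg _
  have h1 : 0 ≤ ∫ p in GamR R, gradSq2 u p := integral_nonneg fun p => gradSq2_nonneg u p
  rcases h0.eq_or_lt with h | h
  · rw [← h, mul_zero]; exact h1
  · rw [← le_div_iff₀ h]
    exact csInf_le ⟨0, fun r hr => lamR_mem_nonneg hr⟩ ⟨u, hu, h.ne', rfl⟩

/-- Up to a null set, `Γ_t` is `Γ_L` together with the two arms `(L,t) × I` and `I × (L,t)`. -/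
lemma integral_GamR_split {L t : ℝ} (hL : 0 ≤ L) (hLt : L ≤ t) {f : ℝ × ℝ → ℝ}
    (hf : Continuous f) :
    ∫ p in GamR t, f p = (∫ p in GamR L, f p) + (∫ p in Ioo L t ×ˢ Ioo (-1 : ℝ) 0, f p)
      + ∫ p in Ioo (-1 : ℝ) 0 ×ˢ Ioo L t, f p := by
  have hm : MeasurableSet (GamR L) := (isOpen_GamR L).measurableSet
  have hA : MeasurableSet (Ico L t ×ˢ Ioo (-1 : ℝ) 0) := measurableSet_Ico.prod measurableSet_Ioo
  have hB : MeasurableSet (Ioo (-1 : ℝ) 0 ×ˢ Ico L t) := measurableSet_Ioo.prod measurableSet_Ico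
  have hset : GamR t = (GamR L ∪ Ico L t ×ˢ Ioo (-1 : ℝ) 0) ∪ Ioo (-1 : ℝ) 0 ×ˢ Ico L t := by
    ext ⟨x, y⟩
    simp only [mem_union, mem_GamR (show -1 < t by linarith), mem_GamR (show -1 < L by linarith),
      mem_prod, mem_Ico, mem_Ioo]
    constructor
    · rintro ⟨a, b, c, d, e⟩
      rcases lt_or_ge x L with hx | hx
      · rcases lt_or_ge y L with hy | hy
        · exact Or.inl (Or.inl ⟨a, hx, c, hy, e⟩)
        · refine Or.inr ⟨⟨a, ?_⟩, hy, d⟩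
          rcases e with e | e <;> linarith
      · refine Or.inl (Or.inr ⟨⟨hx, b⟩, c, ?_⟩)
        rcases e with e | e <;> linarith
    · rintro ((⟨a, b, c, d, e⟩ | ⟨⟨a, b⟩, c, d⟩) | ⟨⟨a, b⟩, c, d⟩)
      · exact ⟨a, by linarith, c, by linarith, e⟩
      · exact ⟨by linarith, b, c, by linarith, Or.inr d⟩
      · exact ⟨a, by linarith, by linarith, d, Or.inl b⟩
  have hd1 : Disjoint (GamR L) (Ico L t ×ˢ Ioo (-1 : ℝ) 0) := by
    rw [Set.disjoint_left]
    rintro ⟨x, y⟩ h1 ⟨h2, -⟩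
    have := ((mem_GamR (by linarith) _).1 h1).2.1
    exact absurd h2.1 (not_le.2 this)
  have hd2 : Disjoint (GamR L ∪ Ico L t ×ˢ Ioo (-1 : ℝ) 0) (Ioo (-1 : ℝ) 0 ×ˢ Ico L t) := by
    rw [Set.disjoint_left]
    rintro ⟨x, y⟩ (h1 | ⟨-, h1⟩) ⟨h3, h2⟩
    · have := ((mem_GamR (by linarith) _).1 h1).2.2.2.1
      exact absurd h2.1 (not_le.2 this)
    · have a := h1.2
      have b := h2.1
      simp only at a b
      linarith
  have hi : IntegrableOn f (GamR t) := integrableOn_GamR (by linarith) hf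
  have hi2 := hi
  rw [hset] at hi2
  have e1 : (Ico L t ×ˢ Ioo (-1 : ℝ) 0 : Set (ℝ × ℝ)) =ᵐ[volume] Ioo L t ×ˢ Ioo (-1 : ℝ) 0 :=
    Measure.set_prod_ae_eq Ioo_ae_eq_Ico.symm (ae_eq_refl _)
  have e2 : (Ioo (-1 : ℝ) 0 ×ˢ Ico L t : Set (ℝ × ℝ)) =ᵐ[volume] Ioo (-1 : ℝ) 0 ×ˢ Ioo L t :=
    Measure.set_prod_ae_eq (ae_eq_refl _) Ioo_ae_eq_Ico.symm
  rw [hset, setIntegral_union hd2 hB hi2.left_of_union hi2.right_of_union,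
    setIntegral_union hd1 hA hi2.left_of_union.left_of_union hi2.left_of_union.right_of_union,
    setIntegral_congr_set e1, setIntegral_congr_set e2]

/-! ### The Poincaré inequality on the arms -/

/-- For `k < π` the function `φ y = cos (k (y + 1/2))` is positive on `[-1,0]`, and
`f'² - k² f² - (f² φ'/φ)' = (f' - f φ'/φ)² ≥ 0`; the boundary terms vanish with `f`. -/
lemma poincare_aux {f : ℝ → ℝ} (hf : ContDiff ℝ 1 f) (h0 : f (-1) = 0) (h1 : f 0 = 0)
    {k : ℝ} (hk0 : 0 < k) (hk : k < π) :
    k ^ 2 * ∫ y in (-1 : ℝ)..0, f y ^ 2 ≤ ∫ y in (-1 : ℝ)..0, deriv f y ^ 2 := by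
  have hc : ∀ y ∈ uIcc (-1 : ℝ) 0, Real.cos (k * (y + 1 / 2)) ≠ 0 := by
    intro y hy
    rw [uIcc_of_le (by norm_num)] at hy
    refine (Real.cos_pos_of_mem_Ioo ⟨?_, ?_⟩).ne' <;> nlinarith [hy.1, hy.2]
  have hd : Continuous (deriv f) := hf.continuous_deriv le_rfl
  have hfc : Continuous f := hf.continuous
  set T : ℝ → ℝ := fun y => Real.sin (k * (y + 1 / 2)) / Real.cos (k * (y + 1 / 2)) with hT
  have hTc : ContinuousOn T (uIcc (-1 : ℝ) 0) :=
    ContinuousOn.div (by fun_prop) (by fun_prop) hc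
  have hg : ∀ y ∈ uIcc (-1 : ℝ) 0, HasDerivAt (fun y => -k * T y * f y ^ 2)
      (-k ^ 2 * (1 + T y ^ 2) * f y ^ 2 - 2 * k * T y * f y * deriv f y) y := by
    intro y hy
    have hl : HasDerivAt (fun y : ℝ => k * (y + 1 / 2)) k y := by
      exact (((hasDerivAt_id y).add_const (1 / 2)).const_mul k).congr_deriv (mul_one k)
    have hTd : HasDerivAt T (k * (1 + T y ^ 2)) y := by
      refine (hl.sin.div hl.cos (hc y hy)).congr_deriv ?_
      have := hc y hy
      simp only [hT]
      generalize k * (y + 1 / 2) = θ at this ⊢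
      field_simp
      ring
    have hfd : HasDerivAt f (deriv f y) y :=
      (hf.differentiable one_ne_zero y).hasDerivAt
    refine ((hTd.const_mul (-k)).mul (hfd.pow 2)).congr_deriv ?_
    simp only [Pi.pow_apply]
    push_cast
    ring
  have hgc : ContinuousOn (fun y => -k ^ 2 * (1 + T y ^ 2) * f y ^ 2
      - 2 * k * T y * f y * deriv f y) (uIcc (-1 : ℝ) 0) := by
    fun_prop
  have hint := intervalIntegral.integral_eq_sub_of_hasDerivAt hg hgc.intervalIntegrable
  simp only [h0, h1] at hint
  have hi1 : IntervalIntegrable (fun y => deriv f y ^ 2) volume (-1) 0 :=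
    (hd.pow 2).intervalIntegrable _ _
  have hi2 : IntervalIntegrable (fun y => k ^ 2 * f y ^ 2) volume (-1) 0 :=
    (continuous_const.mul (hfc.pow 2)).intervalIntegrable _ _
  have hle : ∫ y in (-1 : ℝ)..0, (-k ^ 2 * (1 + T y ^ 2) * f y ^ 2
      - 2 * k * T y * f y * deriv f y) ≤
      ∫ y in (-1 : ℝ)..0, (deriv f y ^ 2 - k ^ 2 * f y ^ 2) := by
    refine intervalIntegral.integral_mono_on (by norm_num) hgc.intervalIntegrable
      (hi1.sub hi2) fun y _ => ?_
    nlinarith [sq_nonneg (deriv f y + k * T y * f y)]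
  rw [hint, intervalIntegral.integral_sub hi1 hi2, intervalIntegral.integral_const_mul] at hle
  linarith

/-- The one-dimensional Dirichlet Poincaré inequality on `(-1,0)` with its sharp constant. -/
lemma poincare {f : ℝ → ℝ} (hf : ContDiff ℝ 1 f) (h0 : f (-1) = 0) (h1 : f 0 = 0) :
    π ^ 2 * ∫ y in Ioo (-1 : ℝ) 0, f y ^ 2 ≤ ∫ y in Ioo (-1 : ℝ) 0, deriv f y ^ 2 := by
  have e : ∀ g : ℝ → ℝ, ∫ y in Ioo (-1 : ℝ) 0, g y = ∫ y in (-1 : ℝ)..0, g y := fun g => by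
    rw [intervalIntegral.integral_of_le (by norm_num), integral_Ioc_eq_integral_Ioo]
  rw [e, e]
  have hcont : Continuous fun k : ℝ => k ^ 2 * ∫ y in (-1 : ℝ)..0, f y ^ 2 := by fun_prop
  have ht : Filter.Tendsto (fun k : ℝ => k ^ 2 * ∫ y in (-1 : ℝ)..0, f y ^ 2)
      (nhdsWithin π (Iio π)) (nhds (π ^ 2 * ∫ y in (-1 : ℝ)..0, f y ^ 2)) :=
    (hcont.tendsto π).mono_left nhdsWithin_le_nhds
  refine le_of_tendsto ht ?_
  filter_upwards [Ioo_mem_nhdsLT Real.pi_pos] with k hk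
  exact poincare_aux hf h0 h1 hk.1 hk.2

lemma integrableOn_prod_Ioo {a b c d : ℝ} {f : ℝ × ℝ → ℝ} (hf : Continuous f) :
    IntegrableOn f (Ioo a b ×ˢ Ioo c d) :=
  (hf.continuousOn.integrableOn_compact ((isCompact_Icc (a := a) (b := b)).prod
    (isCompact_Icc (a := c) (b := d)))).mono_set (prod_mono Ioo_subset_Icc_self Ioo_subset_Icc_self)

/-- On an arm `(a,b) × I` only `∂₂u` is needed: slice in `x` and apply `poincare`. -/
lemma poincare_arm {a b : ℝ} {u : ℝ × ℝ → ℝ} (hu : ContDiff ℝ 1 u)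
    (h : ∀ x ∈ Ioo a b, u (x, -1) = 0 ∧ u (x, 0) = 0) :
    π ^ 2 * ∫ p in Ioo a b ×ˢ Ioo (-1 : ℝ) 0, u p ^ 2 ≤
      ∫ p in Ioo a b ×ˢ Ioo (-1 : ℝ) 0, gradSq2 u p := by
  have hd : Continuous fun p => (fderiv ℝ u p (0, 1)) ^ 2 :=
    ((hu.continuous_fderiv one_ne_zero).clm_apply continuous_const).pow 2
  have i1 : IntegrableOn (fun p => u p ^ 2) (Ioo a b ×ˢ Ioo (-1 : ℝ) 0) :=
    integrableOn_prod_Ioo (hu.continuous.pow 2)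
  have i2 : IntegrableOn (fun p => (fderiv ℝ u p (0, 1)) ^ 2) (Ioo a b ×ˢ Ioo (-1 : ℝ) 0) :=
    integrableOn_prod_Ioo hd
  have step : ∫ p in Ioo a b ×ˢ Ioo (-1 : ℝ) 0, (fderiv ℝ u p (0, 1)) ^ 2 ≤
      ∫ p in Ioo a b ×ˢ Ioo (-1 : ℝ) 0, gradSq2 u p :=
    integral_mono i2 (integrableOn_prod_Ioo (continuous_gradSq2 hu))
      fun p => le_add_of_nonneg_left (sq_nonneg _)
  refine le_trans ?_ step
  have i1' := i1.integrable
  have i2' := i2.integrable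
  rw [Measure.volume_eq_prod, ← Measure.prod_restrict] at i1' i2'
  rw [Measure.volume_eq_prod, setIntegral_prod _ i1, setIntegral_prod _ i2,
    ← integral_const_mul]
  refine setIntegral_mono_on (i1'.integral_prod_left.const_mul _) i2'.integral_prod_left
    measurableSet_Ioo fun x hx => ?_
  have hs : ContDiff ℝ 1 fun y : ℝ => u (x, y) := hu.comp (contDiff_const.prodMk contDiff_id)
  have hder : ∀ y, deriv (fun y : ℝ => u (x, y)) y = fderiv ℝ u (x, y) (0, 1) := fun y => by
    have h1 := (hu.differentiable one_ne_zero (x, y)).hasFDerivAt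
    have h2 : HasDerivAt (fun y : ℝ => ((x, y) : ℝ × ℝ)) (0, 1) y :=
      (hasDerivAt_const y x).prodMk (hasDerivAt_id y)
    exact (h1.comp_hasDerivAt y h2).deriv
  have := poincare hs (h x hx).1 (h x hx).2
  simpa only [hder] using this

lemma gradSq2_swap {u : ℝ × ℝ → ℝ} (hu : ContDiff ℝ 1 u) (p : ℝ × ℝ) :
    gradSq2 (u ∘ Prod.swap) p = gradSq2 u p.swap := by
  have h1 := (hu.differentiable one_ne_zero p.swap).hasFDerivAt
  have h2 : HasFDerivAt (Prod.swap : ℝ × ℝ → ℝ × ℝ)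
      ((ContinuousLinearMap.snd ℝ ℝ ℝ).prod (ContinuousLinearMap.fst ℝ ℝ ℝ)) p :=
    hasFDerivAt_snd.prodMk hasFDerivAt_fst
  have h3 := (h1.comp p h2).fderiv
  simp only [gradSq2, h3]
  simp
  ring

lemma integral_swap_arm (a b c d : ℝ) (f : ℝ × ℝ → ℝ) :
    ∫ p in Ioo a b ×ˢ Ioo c d, f p.swap = ∫ p in Ioo c d ×ˢ Ioo a b, f p := by
  have h : MeasurePreserving (Prod.swap : ℝ × ℝ → ℝ × ℝ) volume volume :=
    Measure.measurePreserving_swap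
  have := h.setIntegral_preimage_emb (MeasurableEquiv.prodComm.measurableEmbedding) f
    (Ioo c d ×ˢ Ioo a b)
  rwa [preimage_swap_prod] at this

/-! ### The upper bound `λ₁(Γ_L) ≤ π²` -/

/-- A `C¹` truncation of the identity: it vanishes for `v ≤ δ`, has slope in `[0,1]`, and tends
to the positive part of `v` as `δ → 0`. -/
def trunc (δ v : ℝ) : ℝ := √(max (v - δ) 0 ^ 2 + δ ^ 2) - δ

/-- A smooth approximation from below of `min x y`, obtained from
`min x y = (x + y - |x - y|) / 2`. -/
def smin (ε : ℝ) (p : ℝ × ℝ) : ℝ := (p.1 + p.2 - √((p.1 - p.2) ^ 2 + ε ^ 2)) / 2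

/-- The regularisation of the trial function `sin (π (min x y + 1))`. Using `δ / 2` in the
smoothed minimum makes the truncation at level `δ` absorb its error on the boundary. -/
def trial (δ : ℝ) (p : ℝ × ℝ) : ℝ := trunc δ (Real.sin (π * (smin (δ / 2) p + 1)))

lemma hasDerivAt_max_sq (x : ℝ) : HasDerivAt (fun x : ℝ => max x 0 ^ 2) (2 * max x 0) x := by
  rcases lt_trichotomy x 0 with h | rfl | h
  · have : (fun x : ℝ => max x 0 ^ 2) =ᶠ[nhds x] fun _ => 0 := by
      filter_upwards [Iio_mem_nhds h] with y hy
      simp [max_eq_right (le_of_lt (mem_Iio.1 hy))]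
    rw [max_eq_right h.le, mul_zero]
    exact (hasDerivAt_const x (0 : ℝ)).congr_of_eventuallyEq this
  · rw [max_self, mul_zero, ← hasDerivWithinAt_univ, ← Iic_union_Ici (a := (0 : ℝ))]
    refine HasDerivWithinAt.union ?_ ?_
    · refine (hasDerivWithinAt_const (0 : ℝ) _ (0 : ℝ)).congr (fun y hy => ?_) (by simp)
      simp [max_eq_right (show y ≤ 0 from hy)]
    · have h := ((hasDerivAt_pow 2 (0 : ℝ)).hasDerivWithinAt (s := Ici 0))
      refine (h.congr_deriv (by simp)).congr (fun y hy => ?_) (by simp)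
      simp [max_eq_left (show 0 ≤ y from hy)]
  · have : (fun x : ℝ => max x 0 ^ 2) =ᶠ[nhds x] fun x => x ^ 2 := by
      filter_upwards [Ioi_mem_nhds h] with y hy
      simp [max_eq_left (le_of_lt (mem_Ioi.1 hy))]
    rw [max_eq_left h.le]
    exact ((hasDerivAt_pow 2 x).congr_of_eventuallyEq this).congr_deriv (by simp)

lemma contDiff_max_sq : ContDiff ℝ 1 fun x : ℝ => max x 0 ^ 2 := by
  refine contDiff_one_iff_deriv.2 ⟨fun x => (hasDerivAt_max_sq x).differentiableAt, ?_⟩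
  rw [show deriv (fun x : ℝ => max x 0 ^ 2) = fun x => 2 * max x 0 from
    funext fun x => (hasDerivAt_max_sq x).deriv]
  fun_prop

lemma contDiff_trunc {δ : ℝ} (hδ : 0 < δ) : ContDiff ℝ 1 (trunc δ) := by
  have h : ContDiff ℝ 1 fun v : ℝ => max (v - δ) 0 ^ 2 + δ ^ 2 :=
    (contDiff_max_sq.comp (contDiff_id.sub contDiff_const)).add contDiff_const
  exact (h.sqrt fun v => by positivity).sub contDiff_const

lemma hasDerivAt_trunc {δ : ℝ} (hδ : 0 < δ) (v : ℝ) :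
    ∃ c, HasDerivAt (trunc δ) c v ∧ c ^ 2 ≤ 1 := by
  have h1 : HasDerivAt (fun v : ℝ => max (v - δ) 0 ^ 2 + δ ^ 2) (2 * max (v - δ) 0) v :=
    ((hasDerivAt_max_sq (v - δ)).comp_sub_const v δ).add_const _
  have hpos : 0 < max (v - δ) 0 ^ 2 + δ ^ 2 := by positivity
  refine ⟨_, (h1.sqrt hpos.ne').sub_const δ, ?_⟩
  rw [div_pow, mul_pow, mul_pow, Real.sq_sqrt hpos.le, div_le_one (by positivity)]
  nlinarith

lemma trunc_of_le {δ v : ℝ} (hδ : 0 < δ) (hv : v ≤ δ) : trunc δ v = 0 := by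
  rw [trunc, max_eq_right (by linarith)]
  simp [Real.sqrt_sq hδ.le]

lemma trunc_zero (v : ℝ) : trunc 0 v = max v 0 := by
  simp [trunc, Real.sqrt_sq]

lemma trunc_nonneg {δ : ℝ} (hδ : 0 < δ) (v : ℝ) : 0 ≤ trunc δ v := by
  rw [trunc, sub_nonneg]
  apply Real.le_sqrt_of_sq_le
  nlinarith [sq_nonneg (max (v - δ) 0)]

lemma trunc_le_one {δ v : ℝ} (hδ : 0 < δ) (hv : v ≤ 1) : trunc δ v ≤ 1 := by
  have h0 : 0 ≤ max (v - δ) 0 := le_max_right _ _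
  have h1 : max (v - δ) 0 ≤ 1 := max_le (by linarith) (by norm_num)
  rw [trunc, sub_le_iff_le_add]
  apply Real.sqrt_le_iff.2 ⟨by linarith, by nlinarith⟩

lemma smin_zero (p : ℝ × ℝ) : smin 0 p = min p.1 p.2 := by
  simp only [smin, ne_eq, OfNat.ofNat_ne_zero, not_false_eq_true, zero_pow, add_zero,
    Real.sqrt_sq_eq_abs]
  rcases le_total p.1 p.2 with h | h
  · rw [min_eq_left h, abs_of_nonpos (by linarith)]; ring
  · rw [min_eq_right h, abs_of_nonneg (by linarith)]; ring

lemma smin_le {ε : ℝ} (p : ℝ × ℝ) : smin ε p ≤ min p.1 p.2 := by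
  have : |p.1 - p.2| ≤ √((p.1 - p.2) ^ 2 + ε ^ 2) := by
    rw [← Real.sqrt_sq_eq_abs]
    exact Real.sqrt_le_sqrt (by nlinarith)
  rw [← smin_zero, smin, smin]
  simp [Real.sqrt_sq_eq_abs]
  linarith

lemma le_smin {ε : ℝ} (hε : 0 ≤ ε) (p : ℝ × ℝ) : min p.1 p.2 - ε / 2 ≤ smin ε p := by
  have : √((p.1 - p.2) ^ 2 + ε ^ 2) ≤ |p.1 - p.2| + ε := by
    refine Real.sqrt_le_iff.2 ⟨by positivity, ?_⟩
    nlinarith [sq_abs (p.1 - p.2), abs_nonneg (p.1 - p.2)]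
  rw [← smin_zero, smin, smin]
  simp [Real.sqrt_sq_eq_abs]
  linarith

/-- The gradient of the smoothed minimum is `((1 - s) / 2, (1 + s) / 2)` with `|s| ≤ 1`, so its
length is at most one. -/
lemma hasFDerivAt_smin {ε : ℝ} (hε : 0 < ε) (p : ℝ × ℝ) :
    ∃ (s : ℝ) (D : ℝ × ℝ →L[ℝ] ℝ), HasFDerivAt (smin ε) D p ∧ s ^ 2 ≤ 1 ∧
      D (1, 0) = (1 - s) / 2 ∧ D (0, 1) = (1 + s) / 2 := by
  have hpos : 0 < (p.1 - p.2) ^ 2 + ε ^ 2 := by positivity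
  have h1 : HasFDerivAt (fun p : ℝ × ℝ => p.1) (ContinuousLinearMap.fst ℝ ℝ ℝ) p := hasFDerivAt_fst
  have h2 : HasFDerivAt (fun p : ℝ × ℝ => p.2) (ContinuousLinearMap.snd ℝ ℝ ℝ) p := hasFDerivAt_snd
  have hr : HasDerivAt (fun d : ℝ => √(d ^ 2 + ε ^ 2))
      ((p.1 - p.2) / √((p.1 - p.2) ^ 2 + ε ^ 2)) (p.1 - p.2) := by
    have := (((hasDerivAt_pow 2 (p.1 - p.2)).add_const (ε ^ 2)).sqrt hpos.ne')
    refine this.congr_deriv ?_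
    have : 0 < √((p.1 - p.2) ^ 2 + ε ^ 2) := Real.sqrt_pos.2 hpos
    push_cast
    field_simp
  have h3 := hr.comp_hasFDerivAt p (h1.sub h2)
  refine ⟨(p.1 - p.2) / √((p.1 - p.2) ^ 2 + ε ^ 2), _,
    (((h1.add h2).sub h3).const_mul (1 / 2)).congr_of_eventuallyEq
      (Filter.Eventually.of_forall fun q => ?_), ?_, ?_, ?_⟩
  · simp [smin]; ring
  · rw [div_pow, Real.sq_sqrt hpos.le, div_le_one hpos]
    nlinarith
  · simp; ring
  · simp; ring

lemma contDiff_trial {δ : ℝ} (hδ : 0 < δ) : ContDiff ℝ 1 (trial δ) := by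
  have h : ContDiff ℝ 1 (smin (δ / 2)) := by
    have h1 : ContDiff ℝ 1 fun p : ℝ × ℝ => √((p.1 - p.2) ^ 2 + (δ / 2) ^ 2) :=
      ContDiff.sqrt (by fun_prop) fun p => by positivity
    unfold smin
    fun_prop
  exact (contDiff_trunc hδ).comp (Real.contDiff_sin.comp (contDiff_const.mul (h.add contDiff_const)))

lemma admR_trial {δ : ℝ} (hδ : 0 < δ) (hδ1 : δ ≤ 1) (R : ℝ) : AdmR R (trial δ) := by
  refine ⟨contDiff_trial hδ, fun p hp => trunc_of_le hδ ?_⟩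
  have h1 := smin_le (ε := δ / 2) p
  have h2 := le_smin (ε := δ / 2) (by linarith) p
  have hpi := Real.pi_pos
  have hpi4 := Real.pi_le_four
  -- `smin` is within `δ / 4` of `-1` or `0`, and `π δ / 4 ≤ δ`.
  rcases min_of_mem_DirB hp with h | h <;> rw [h] at h1 h2
  · refine (Real.sin_nonpos_of_nonpos_of_neg_pi_le ?_ ?_).trans hδ.le <;> nlinarith
  · rw [show π * (smin (δ / 2) p + 1) = π - π * (-smin (δ / 2) p) by ring, Real.sin_pi_sub]
    refine (Real.sin_le (by nlinarith)).trans ?_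
    nlinarith

lemma gradSq2_trial_le {δ : ℝ} (hδ : 0 < δ) (p : ℝ × ℝ) :
    gradSq2 (trial δ) p ≤ π ^ 2 * Real.cos (π * (smin (δ / 2) p + 1)) ^ 2 := by
  obtain ⟨s, D, hD, hs, d1, d2⟩ := hasFDerivAt_smin (half_pos hδ) p
  obtain ⟨c, hc, hc1⟩ := hasDerivAt_trunc hδ (Real.sin (π * (smin (δ / 2) p + 1)))
  have h := (hc.comp_hasFDerivAt p ((hD.add_const 1).const_mul π).sin).fderiv
  have e : (trunc δ ∘ fun x => Real.sin (π * (smin (δ / 2) x + 1))) = trial δ := rfl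
  rw [e] at h
  simp only [gradSq2, h, smul_apply, d1, d2, smul_eq_mul]
  set C := Real.cos (π * (smin (δ / 2) p + 1))
  have e2 : (c * (C * (π * ((1 - s) / 2)))) ^ 2 + (c * (C * (π * ((1 + s) / 2)))) ^ 2
    = (π ^ 2 * C ^ 2) * (c ^ 2 * ((1 + s ^ 2) / 2)) := by ring
  rw [e2]
  refine mul_le_of_le_one_right (by positivity) (mul_le_one₀ hc1 (by positivity) (by linarith))

lemma integral_cos_arm (L : ℝ) :
    ∫ p in Ioo 0 L ×ˢ Ioo (-1 : ℝ) 0, Real.cos (2 * π * min p.1 p.2) = 0 := by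
  have hc : Continuous fun p : ℝ × ℝ => Real.cos (2 * π * min p.1 p.2) := by fun_prop
  rw [Measure.volume_eq_prod, setIntegral_prod _ (integrableOn_prod_Ioo hc)]
  refine (setIntegral_congr_fun measurableSet_Ioo fun x hx => ?_).trans (integral_zero ℝ ℝ)
  have : ∫ y in Ioo (-1 : ℝ) 0, Real.cos (2 * π * min x y) =
      ∫ y in Ioo (-1 : ℝ) 0, Real.cos (2 * π * y) :=
    setIntegral_congr_fun measurableSet_Ioo fun y hy => by
      simp only [min_eq_right (hy.2.le.trans hx.1.le)]
  simp only [this]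
  rw [← integral_Ioc_eq_integral_Ioo, ← intervalIntegral.integral_of_le (by norm_num),
    intervalIntegral.integral_comp_mul_left _ (by positivity)]
  simp

lemma integral_cos_inner {x : ℝ} (hx : x ∈ Ioo (-1 : ℝ) 0) :
    ∫ y in Ioo (-1 : ℝ) 0, Real.cos (2 * π * min x y) =
      Real.sin (2 * π * x) / (2 * π) - x * Real.cos (2 * π * x) := by
  have hc : Continuous fun y : ℝ => Real.cos (2 * π * min x y) := by fun_prop
  rw [← integral_Ioc_eq_integral_Ioo, ← intervalIntegral.integral_of_le (by norm_num),
    ← intervalIntegral.integral_add_adjacent_intervals (hc.intervalIntegrable (-1) x)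
      (hc.intervalIntegrable x 0)]
  have e1 : ∫ y in (-1 : ℝ)..x, Real.cos (2 * π * min x y) =
      ∫ y in (-1 : ℝ)..x, Real.cos (2 * π * y) :=
    intervalIntegral.integral_congr fun y hy => by
      rw [uIcc_of_le hx.1.le] at hy
      simp only [min_eq_right hy.2]
  have e2 : ∫ y in x..0, Real.cos (2 * π * min x y) =
      ∫ y in x..0, Real.cos (2 * π * x) :=
    intervalIntegral.integral_congr fun y hy => by
      rw [uIcc_of_le hx.2.le] at hy
      simp only [min_eq_left hy.1]
  rw [e1, e2, intervalIntegral.integral_comp_mul_left _ (by positivity)]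
  simp
  field_simp
  ring

lemma integral_cos_square :
    ∫ p in Ioo (-1 : ℝ) 0 ×ˢ Ioo (-1 : ℝ) 0, Real.cos (2 * π * min p.1 p.2) = 0 := by
  have hc : Continuous fun p : ℝ × ℝ => Real.cos (2 * π * min p.1 p.2) := by fun_prop
  rw [Measure.volume_eq_prod, setIntegral_prod _ (integrableOn_prod_Ioo hc),
    setIntegral_congr_fun measurableSet_Ioo fun x hx => integral_cos_inner hx,
    ← integral_Ioc_eq_integral_Ioo, ← intervalIntegral.integral_of_le (by norm_num)]
  have hd : ∀ x ∈ uIcc (-1 : ℝ) 0, HasDerivAt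
      (fun x => -(x * Real.sin (2 * π * x)) / (2 * π) - 2 * Real.cos (2 * π * x) / (2 * π) ^ 2)
      (Real.sin (2 * π * x) / (2 * π) - x * Real.cos (2 * π * x)) x := by
    intro x _
    have hl : HasDerivAt (fun x : ℝ => 2 * π * x) (2 * π) x := by
      exact ((hasDerivAt_id x).const_mul (2 * π)).congr_deriv (mul_one _)
    refine ((((hasDerivAt_id x).mul hl.sin).neg.div_const (2 * π)).sub
      ((hl.cos.const_mul 2).div_const ((2 * π) ^ 2))).congr_deriv ?_
    simp only [id]
    field_simp
    ring
  rw [intervalIntegral.integral_eq_sub_of_hasDerivAt hd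
    (Continuous.intervalIntegrable (by fun_prop) _ _)]
  simp

lemma GamR_zero : GamR 0 = Ioo (-1 : ℝ) 0 ×ˢ Ioo (-1 : ℝ) 0 := by
  ext p
  simp only [mem_GamR (show (-1 : ℝ) < 0 by norm_num), mem_prod, mem_Ioo]
  tauto

/-- The trial function `sin (π (min x y + 1))` has Rayleigh quotient exactly `π²`, because
`cos² - sin² = cos (2 ·)` and this integral vanishes. -/
lemma integral_cos_GamR {L : ℝ} (hL : 0 ≤ L) :
    ∫ p in GamR L, Real.cos (2 * π * min p.1 p.2) = 0 := by
  have hc : Continuous fun p : ℝ × ℝ => Real.cos (2 * π * min p.1 p.2) := by fun_prop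
  rw [integral_GamR_split le_rfl hL hc, GamR_zero, integral_cos_square, integral_cos_arm L,
    ← integral_swap_arm]
  simp only [Prod.fst_swap, Prod.snd_swap, min_comm]
  simp only [integral_cos_arm L]
  simp

/-- Comparison with `trial δ` in the limit `δ → 0`. The kink of `sin (π (min x y + 1))` on the
diagonal and its nonzero slope at the corner `(0,0)` prevent it from being admissible itself. -/
lemma lamR_le_pi_sq {L : ℝ} (hL : 0 ≤ L) : lamR L ≤ π ^ 2 := by
  have hL1 : -1 < L := by linarith
  have : IsFiniteMeasure (volume.restrict (GamR L)) := by
    refine ⟨?_⟩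
    rw [Measure.restrict_apply_univ]
    exact (measure_mono (GamR_subset_Icc hL1)).trans_lt
      (isCompact_Icc.prod isCompact_Icc).measure_lt_top
  have hmin : Continuous fun p : ℝ × ℝ => min p.1 p.2 := by fun_prop
  have hmass : Filter.Tendsto (fun δ => ∫ p in GamR L, trial δ p ^ 2) (nhdsWithin 0 (Ioi 0))
      (nhds (∫ p in GamR L, Real.sin (π * (min p.1 p.2 + 1)) ^ 2)) := by
    refine tendsto_integral_filter_of_dominated_convergence (fun _ => 1) ?_ ?_
      (integrable_const _) ?_
    · filter_upwards [self_mem_nhdsWithin] with δ hδ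
      exact ((contDiff_trial hδ).continuous.pow 2).aestronglyMeasurable
    · filter_upwards [self_mem_nhdsWithin] with δ hδ
      refine Filter.Eventually.of_forall fun p => ?_
      have h0 := trunc_nonneg hδ (Real.sin (π * (smin (δ / 2) p + 1)))
      have h1 := trunc_le_one (v := Real.sin (π * (smin (δ / 2) p + 1))) hδ (Real.sin_le_one _)
      rw [Real.norm_eq_abs, abs_of_nonneg (sq_nonneg _)]
      exact pow_le_one₀ h0 h1
    · refine (ae_restrict_iff' (isOpen_GamR L).measurableSet).2
        (Filter.Eventually.of_forall fun p hp => ?_)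
      have hcont : Continuous fun δ => trial δ p ^ 2 := by
        unfold trial trunc smin
        fun_prop
      have h := (hcont.tendsto 0).mono_left (nhdsWithin_le_nhds (s := Ioi 0))
      have hpos : 0 ≤ Real.sin (π * (min p.1 p.2 + 1)) := by
        have h1 := hp.1.1
        have h2 := hp.1.2
        have := Real.pi_pos
        exact Real.sin_nonneg_of_nonneg_of_le_pi (by nlinarith) (by nlinarith)
      rw [trial, trunc_zero, zero_div, smin_zero, max_eq_left hpos] at h
      exact h
  have hen : Filter.Tendsto
      (fun δ => ∫ p in GamR L, π ^ 2 * Real.cos (π * (smin (δ / 2) p + 1)) ^ 2)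
      (nhdsWithin 0 (Ioi 0))
      (nhds (∫ p in GamR L, π ^ 2 * Real.cos (π * (min p.1 p.2 + 1)) ^ 2)) := by
    refine tendsto_integral_filter_of_dominated_convergence (fun _ => π ^ 2) ?_ ?_
      (integrable_const _) ?_
    · refine Filter.Eventually.of_forall fun δ => Continuous.aestronglyMeasurable ?_
      unfold smin
      fun_prop
    · refine Filter.Eventually.of_forall fun δ => Filter.Eventually.of_forall fun p => ?_
      rw [Real.norm_eq_abs, abs_of_nonneg (by positivity)]
      exact mul_le_of_le_one_right (by positivity) (Real.cos_sq_le_one _)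
    · refine Filter.Eventually.of_forall fun p => ?_
      have hcont : Continuous fun δ => π ^ 2 * Real.cos (π * (smin (δ / 2) p + 1)) ^ 2 := by
        unfold smin
        fun_prop
      have h := (hcont.tendsto 0).mono_left (nhdsWithin_le_nhds (s := Ioi 0))
      rwa [zero_div, smin_zero] at h
  have hle := le_of_tendsto_of_tendsto (hmass.const_mul (lamR L)) hen (by
    filter_upwards [Ioo_mem_nhdsGT (show (0 : ℝ) < 1 by norm_num)] with δ hδ
    refine (lamR_mul_le (admR_trial hδ.1 hδ.2.le L)).trans ?_
    refine integral_mono (integrableOn_GamR hL1 (continuous_gradSq2 (contDiff_trial hδ.1)))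
      (integrableOn_GamR hL1 ?_) fun p => gradSq2_trial_le hδ.1 p
    unfold smin
    fun_prop)
  have hi1 : IntegrableOn (fun p : ℝ × ℝ => Real.cos (π * (min p.1 p.2 + 1)) ^ 2) (GamR L) :=
    integrableOn_GamR hL1 (by fun_prop)
  have hi2 : IntegrableOn (fun p : ℝ × ℝ => Real.sin (π * (min p.1 p.2 + 1)) ^ 2) (GamR L) :=
    integrableOn_GamR hL1 (by fun_prop)
  have heq : (∫ p in GamR L, Real.cos (π * (min p.1 p.2 + 1)) ^ 2) =
      ∫ p in GamR L, Real.sin (π * (min p.1 p.2 + 1)) ^ 2 := by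
    rw [← sub_eq_zero, ← integral_sub hi1 hi2, ← integral_cos_GamR hL]
    refine integral_congr_ae (Filter.Eventually.of_forall fun p => ?_)
    simp only
    rw [← Real.cos_two_mul', show 2 * (π * (min p.1 p.2 + 1)) = 2 * π * min p.1 p.2 + 2 * π by ring,
      Real.cos_add_two_pi]
  rw [integral_const_mul, heq] at hle
  refine le_of_mul_le_mul_right hle ?_
  have hsub : Function.support (fun p : ℝ × ℝ => Real.sin (π * (min p.1 p.2 + 1)) ^ 2) ∩ GamR L
      = GamR L := by
    refine inter_eq_right.2 fun p hp => ?_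
    have h1 := hp.1.1
    have h2 := hp.1.2
    have := Real.pi_pos
    exact (pow_pos (Real.sin_pos_of_pos_of_lt_pi (by nlinarith) (by nlinarith)) 2).ne'
  rw [setIntegral_pos_iff_support_of_nonneg_ae
    (Filter.Eventually.of_forall fun p => sq_nonneg _) hi2, hsub]
  refine (isOpen_GamR L).measure_pos _ ⟨(-1 / 2, -1 / 2), (mem_GamR hL1 _).2 ?_⟩
  norm_num
  linarith

/-! ### Monotonicity of `t ↦ λ₁(Γ_t)` -/

/-- A `C¹` function supported in the central square `(-1,0)²`, which makes the infima defining
`lamR` and `lamG` run over nonempty sets. -/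
lemma exists_square_bump : ∃ u : ℝ × ℝ → ℝ, ContDiff ℝ 1 u ∧ HasCompactSupport u ∧
    tsupport u ⊆ GamR 0 ∧ u (-1 / 2, -1 / 2) ≠ 0 := by
  let b : ContDiffBump ((-1 / 2, -1 / 2) : ℝ × ℝ) := ⟨1 / 8, 1 / 4, by norm_num, by norm_num⟩
  refine ⟨b, b.contDiff, b.hasCompactSupport, ?_, ?_⟩
  · rw [b.tsupport_eq, GamR_zero, ← closedBall_prod_same]
    have h : Metric.closedBall (-1 / 2 : ℝ) (1 / 4) ⊆ Ioo (-1 : ℝ) 0 := by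
      rw [Real.closedBall_eq_Icc]
      exact Icc_subset_Ioo (by norm_num) (by norm_num)
    exact prod_mono h h
  · exact (b.pos_of_mem_ball (Metric.mem_ball_self b.rOut_pos)).ne'

lemma integral_sq_ne_zero {S : Set (ℝ × ℝ)} {u : ℝ × ℝ → ℝ} {p : ℝ × ℝ} (hS : IsOpen S)
    (hu : Continuous u) (hi : IntegrableOn (fun p => u p ^ 2) S) (hp : p ∈ S) (hup : u p ≠ 0) :
    (∫ p in S, u p ^ 2) ≠ 0 := by
  refine ne_of_gt ?_
  rw [setIntegral_pos_iff_support_of_nonneg_ae (Filter.Eventually.of_forall fun p => sq_nonneg _) hi]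
  have ho : IsOpen (Function.support (fun p => u p ^ 2) ∩ S) :=
    ((hu.pow 2).isOpen_support).inter hS
  exact ho.measure_pos _ ⟨p, pow_ne_zero 2 hup, hp⟩

lemma center_mem_GamR {t : ℝ} (ht : 0 ≤ t) : ((-1 / 2, -1 / 2) : ℝ × ℝ) ∈ GamR t := by
  refine GamR_mono ht ?_
  rw [GamR_zero]
  norm_num

/-- `t ↦ λ₁(Γ_t)` is nondecreasing on `[0,∞)`. On `Γ_t ∖ Γ_L` the sharp Poincaré inequality gives
the energy bound `π²`, which is at least `λ₁(Γ_L)`. -/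
lemma lamR_mono {L t : ℝ} (hL : 0 ≤ L) (hLt : L ≤ t) : lamR L ≤ lamR t := by
  have ht : 0 ≤ t := hL.trans hLt
  refine le_csInf ?_ ?_
  · obtain ⟨u, hu, -, hs, h0⟩ := exists_square_bump
    refine ⟨_, u, ⟨hu, fun p hp => ?_⟩, ?_, rfl⟩
    · by_contra hne
      exact (mem_DirB.1 hp).2.2 (hs (subset_tsupport u hne)).1
    · exact integral_sq_ne_zero (isOpen_GamR t) hu.continuous
        (integrableOn_GamR (by linarith) (hu.continuous.pow 2)) (center_mem_GamR ht) h0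
  · rintro r ⟨u, ⟨hu, hD⟩, hne, rfl⟩
    have hpos : 0 < ∫ p in GamR t, u p ^ 2 :=
      lt_of_le_of_ne (integral_nonneg fun p => sq_nonneg _) hne.symm
    have hu2 : Continuous fun p => u p ^ 2 := hu.continuous.pow 2
    rw [le_div_iff₀ hpos, integral_GamR_split hL hLt hu2,
      integral_GamR_split hL hLt (continuous_gradSq2 hu)]
    have h1 := lamR_mul_le (R := L) ⟨hu, fun p hp => hD p (DirB_mono hLt hp)⟩
    have h2 := poincare_arm (a := L) (b := t) hu fun x hx =>
      ⟨hD _ (mem_DirB_horizontal (hL.trans hx.1.le) hx.2 (Or.inl rfl)),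
        hD _ (mem_DirB_horizontal (hL.trans hx.1.le) hx.2 (Or.inr rfl))⟩
    have hus : ContDiff ℝ 1 (u ∘ Prod.swap) := hu.comp (contDiff_snd.prodMk contDiff_fst)
    have h3 := poincare_arm (a := L) (b := t) hus fun x hx =>
      ⟨hD _ (mem_DirB_vertical (hL.trans hx.1.le) hx.2 (Or.inl rfl)),
        hD _ (mem_DirB_vertical (hL.trans hx.1.le) hx.2 (Or.inr rfl))⟩
    simp only [gradSq2_swap hu, Function.comp_apply] at h3
    rw [integral_swap_arm L t (-1) 0 fun p => u p ^ 2, integral_swap_arm L t (-1) 0 (gradSq2 u)]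
      at h3
    have hpi := lamR_le_pi_sq hL
    have h4 : 0 ≤ ∫ p in Ioo L t ×ˢ Ioo (-1 : ℝ) 0, u p ^ 2 := integral_nonneg fun p => sq_nonneg _
    have h5 : 0 ≤ ∫ p in Ioo (-1 : ℝ) 0 ×ˢ Ioo L t, u p ^ 2 := integral_nonneg fun p => sq_nonneg _
    nlinarith [mul_le_mul_of_nonneg_right hpi h4, mul_le_mul_of_nonneg_right hpi h5]

/-! ### Eigenvalues of the Sturm–Liouville operator -/

lemma not_integrableOn_Ioi_of_le {f : ℝ → ℝ} {T c : ℝ} (hc : 0 < c) (h : ∀ t ∈ Ioi T, c ≤ f t) :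
    ¬ IntegrableOn f (Ioi T) := by
  intro hi
  have h1 : IntegrableOn (fun _ : ℝ => c) (Ioi T) := by
    refine Integrable.mono' hi aestronglyMeasurable_const ?_
    refine (ae_restrict_iff' measurableSet_Ioi).2 (Filter.Eventually.of_forall fun t ht => ?_)
    rw [Real.norm_eq_abs, abs_of_pos hc]
    exact h t ht
  rw [integrableOn_const_iff] at h1
  simp [hc.ne'] at h1

/-- If `q'' = (λ - μ) q` with `λ ≥ μ`, then `q²` is convex with vanishing initial slope, hence
nondecreasing, which is incompatible with integrability unless `q = 0`. -/
lemma eigenvalue_gt {L : ℝ} (hL : 0 ≤ L) {μ : ℝ} {q : ℝ → ℝ} (hq : ContDiff ℝ 2 q)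
    (heq : ∀ t ∈ Ioi L, -(deriv (deriv q) t) + lamR t * q t = μ * q t) (hN : deriv q L = 0)
    (hi : IntegrableOn (fun t => q t ^ 2) (Ioi L)) (hne : ∃ t ∈ Ici L, q t ≠ 0) :
    lamR L < μ := by
  by_contra! hμ
  have hq1 : ∀ t, HasDerivAt q (deriv q t) t := fun t =>
    (hq.differentiable two_ne_zero t).hasDerivAt
  have hdq : ContDiff ℝ 1 (deriv q) := by
    have : ContDiff ℝ (1 + 1) q := by simpa [one_add_one_eq_two] using hq
    exact (contDiff_succ_iff_deriv.1 this).2.2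
  have hq2 : ∀ t, HasDerivAt (deriv q) (deriv (deriv q) t) t := fun t =>
    (hdq.differentiable one_ne_zero t).hasDerivAt
  have hw : ∀ t, HasDerivAt (fun t => q t * deriv q t)
      (deriv q t * deriv q t + q t * deriv (deriv q) t) t := fun t => (hq1 t).mul (hq2 t)
  have hwm : MonotoneOn (fun t => q t * deriv q t) (Ici L) := by
    refine monotoneOn_of_deriv_nonneg (convex_Ici L)
      (fun t _ => (hw t).continuousAt.continuousWithinAt)
      (fun t _ => (hw t).differentiableAt.differentiableWithinAt) fun t ht => ?_
    rw [interior_Ici] at ht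
    rw [(hw t).deriv]
    have h1 := heq t ht
    have h2 : 0 ≤ lamR t - μ := by linarith [lamR_mono hL (le_of_lt (mem_Ioi.1 ht))]
    have h3 : deriv (deriv q) t = (lamR t - μ) * q t := by linarith
    rw [h3]
    nlinarith [mul_nonneg h2 (sq_nonneg (q t)), sq_nonneg (deriv q t)]
  have hs : ∀ t, HasDerivAt (fun t => q t ^ 2) (2 * (q t * deriv q t)) t := fun t =>
    ((hq1 t).pow 2).congr_deriv (by push_cast; ring)
  have hsm : MonotoneOn (fun t => q t ^ 2) (Ici L) := by
    refine monotoneOn_of_deriv_nonneg (convex_Ici L)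
      (fun t _ => (hs t).continuousAt.continuousWithinAt)
      (fun t _ => (hs t).differentiableAt.differentiableWithinAt) fun t ht => ?_
    rw [interior_Ici] at ht
    rw [(hs t).deriv]
    have := hwm self_mem_Ici (le_of_lt (mem_Ioi.1 ht) : L ≤ t) (le_of_lt (mem_Ioi.1 ht))
    simp only [hN, mul_zero] at this
    linarith
  obtain ⟨T, hT, hqT⟩ := hne
  refine not_integrableOn_Ioi_of_le (f := fun t => q t ^ 2) (T := T) (pow_pos (abs_pos.2 hqT) 2)
    (fun t ht => ?_) (hi.mono_set (Ioi_subset_Ioi hT))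
  rw [sq_abs]
  exact hsm hT (le_trans hT (le_of_lt (mem_Ioi.1 ht)) : L ≤ t) (le_of_lt (mem_Ioi.1 ht))

/-! ### The ground energy -/

/-- A trial function for `λ₁(Γ)` is also one for `λ₁(Γ_t)` as soon as the box contains its
support. -/
lemma lamR_le_of_trial {u : ℝ × ℝ → ℝ} (hu : ContDiff ℝ 1 u) (hc : HasCompactSupport u)
    (hs : tsupport u ⊆ Gam) (hne : (∫ p in Gam, u p ^ 2) ≠ 0) :
    ∃ T : ℝ, ∀ t ≥ T, lamR t ≤ (∫ p in Gam, gradSq2 u p) / ∫ p in Gam, u p ^ 2 := by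
  obtain ⟨M, hM⟩ := hc.isCompact.isBounded.exists_norm_le
  refine ⟨M + 1, fun t ht => ?_⟩
  have hsub : tsupport u ⊆ GamR t := by
    intro p hp
    have h := hM p hp
    have h1 := (norm_fst_le p).trans h
    have h2 := (norm_snd_le p).trans h
    rw [Real.norm_eq_abs, abs_le] at h1 h2
    refine ⟨hs hp, abs_lt.2 ⟨?_, ?_⟩, abs_lt.2 ⟨?_, ?_⟩⟩ <;> linarith [h1.1, h1.2, h2.1, h2.2]
  have e1 : ∫ p in GamR t, u p ^ 2 = ∫ p in Gam, u p ^ 2 := by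
    refine (setIntegral_eq_of_subset_of_forall_sdiff_eq_zero isOpen_Gam.measurableSet
      inter_subset_left fun p hp => ?_).symm
    rw [image_eq_zero_of_notMem_tsupport fun h => hp.2 (hsub h)]
    norm_num
  have e2 : ∫ p in GamR t, gradSq2 u p = ∫ p in Gam, gradSq2 u p := by
    refine (setIntegral_eq_of_subset_of_forall_sdiff_eq_zero isOpen_Gam.measurableSet
      inter_subset_left fun p hp => ?_).symm
    have hp' : p ∉ tsupport u := fun h => hp.2 (hsub h)
    simp [gradSq2, fderiv_of_notMem_tsupport ℝ hp']
  rw [← e1, ← e2]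
  refine csInf_le ⟨0, fun r hr => lamR_mem_nonneg hr⟩ ⟨u, ⟨hu, fun p hp => ?_⟩, by rwa [e1], rfl⟩
  by_contra h
  exact (mem_DirB.1 hp).2.2 (hs (subset_tsupport u h))

lemma integral_comp_affine (n : ℝ) (hn : 0 < n) (f : ℝ → ℝ) :
    ∫ t, f (t / n - 4) = n * ∫ t, f t := by
  rw [Measure.integral_comp_div (fun s => f (s - 4)) n, integral_sub_right_eq_self, abs_of_pos hn,
    smul_eq_mul]

/-- If the potential is at most `r` far out, then a wide bump placed far out has a Rayleigh
quotient exceeding `r` by only `O(n⁻²)`, where `n` is its width. -/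
lemma muSL_le_of_eventually_le {L r T : ℝ} (h : ∀ t ≥ T, lamR t ≤ r) : muSL L ≤ r := by
  let b : ContDiffBump (0 : ℝ) := ⟨1, 2, by norm_num, by norm_num⟩
  have hb : ContDiff ℝ 1 b := b.contDiff
  have hbd : Continuous (deriv b) := hb.continuous_deriv le_rfl
  have hb2c : HasCompactSupport fun t => b t ^ 2 :=
    b.hasCompactSupport.comp_left (g := fun s => s ^ 2) (by norm_num)
  have hb2 : Integrable fun t => b t ^ 2 :=
    (hb.continuous.pow 2).integrable_of_hasCompactSupport hb2c
  have hbd2 : Integrable fun t => deriv b t ^ 2 :=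
    (hbd.pow 2).integrable_of_hasCompactSupport (by
      simpa [pow_two] using b.hasCompactSupport.deriv.mul_right (f' := deriv b))
  have hbpos : 0 < ∫ t, b t ^ 2 := by
    refine (hb.continuous.pow 2).integral_pos_of_hasCompactSupport_nonneg_nonzero ?_
      (fun t => sq_nonneg _) (x := 0) ?_
    · exact hb2c
    · exact (pow_pos (b.pos_of_mem_ball (Metric.mem_ball_self b.rOut_pos)) 2).ne'
  set C := (∫ t, deriv b t ^ 2) / ∫ t, b t ^ 2 with hC
  have key : ∀ n : ℝ, 1 + |L| + |T| ≤ n → muSL L ≤ C / n ^ 2 + r := by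
    intro n hn
    have hn0 : 0 < n := by linarith [abs_nonneg L, abs_nonneg T]
    have hLn : L ≤ n := by linarith [le_abs_self L, abs_nonneg T]
    have hTn : T ≤ n := by linarith [le_abs_self T, abs_nonneg L]
    -- The support of `q` is `[2n, 6n]`, to the right of both `L` and `T`.
    set q : ℝ → ℝ := fun t => b (t / n - 4) with hq
    have hqc : ContDiff ℝ 1 q := hb.comp ((contDiff_id.div_const n).sub contDiff_const)
    have hqd : ∀ t, deriv q t = deriv b (t / n - 4) / n := fun t => by
      have h1 : HasDerivAt (fun t : ℝ => t / n - 4) (1 / n) t :=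
        ((hasDerivAt_id t).div_const n).sub_const 4
      have h2 := ((hb.differentiable one_ne_zero (t / n - 4)).hasDerivAt.comp t h1).deriv
      rw [show q = b ∘ fun t => t / n - 4 from rfl, h2]
      ring
    have hsupp : ∀ t, t ∉ Ioi n → t / n - 4 ∉ tsupport b := fun t ht hmem => by
      rw [b.tsupport_eq, Metric.mem_closedBall, Real.dist_eq, abs_le] at hmem
      have h1 : t / n ≤ 1 := (div_le_one hn0).2 (not_lt.1 ht)
      have h2 : -2 ≤ t / n - 4 - 0 := hmem.1
      linarith
    have hq0 : ∀ t, t ∉ Ioi n → q t = 0 := fun t ht =>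
      image_eq_zero_of_notMem_tsupport (f := b) (hsupp t ht)
    have hqd0 : ∀ t, t ∉ Ioi n → deriv q t = 0 := fun t ht => by
      have : deriv b (t / n - 4) = 0 := by
        rw [← fderiv_apply_one_eq_deriv, fderiv_of_notMem_tsupport ℝ (hsupp t ht)]
        simp
      rw [hqd, this, zero_div]
    have hLI : ∀ t, t ∉ Ioi L → t ∉ Ioi n := fun t ht h' => ht (lt_of_le_of_lt hLn h')
    have i1 : Integrable fun t => q t ^ 2 := (hb2.comp_sub_right 4).comp_div hn0.ne'
    have i2 : Integrable fun t => deriv q t ^ 2 := by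
      have := ((hbd2.comp_sub_right 4).comp_div hn0.ne').div_const (n ^ 2)
      refine this.congr (Filter.Eventually.of_forall fun t => ?_)
      simp only [hqd, div_pow]
    have v1 : ∫ t in Ioi L, q t ^ 2 = n * ∫ t, b t ^ 2 := by
      rw [setIntegral_eq_integral_of_forall_compl_eq_zero fun t ht => by
        rw [hq0 t (hLI t ht)]; norm_num]
      exact integral_comp_affine n hn0 fun s => b s ^ 2
    have v2 : ∫ t in Ioi L, deriv q t ^ 2 = (∫ t, deriv b t ^ 2) / n := by
      rw [setIntegral_eq_integral_of_forall_compl_eq_zero fun t ht => by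
        rw [hqd0 t (hLI t ht)]; norm_num]
      simp only [hqd, div_pow]
      rw [integral_div, integral_comp_affine n hn0 fun s => deriv b s ^ 2]
      field_simp
    have hpos : 0 < ∫ t in Ioi L, q t ^ 2 := by rw [v1]; positivity
    have hnum : ∫ t in Ioi L, (deriv q t ^ 2 + lamR t * q t ^ 2) ≤
        ∫ t in Ioi L, (deriv q t ^ 2 + r * q t ^ 2) := by
      -- No integrability of the left integrand is needed: its integral is `0` otherwise.
      refine integral_mono_of_nonneg (Filter.Eventually.of_forall fun t => ?_)
        (i2.add (i1.const_mul r)).integrableOn (Filter.Eventually.of_forall fun t => ?_)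
      · exact add_nonneg (sq_nonneg _) (mul_nonneg (lamR_nonneg t) (sq_nonneg _))
      · by_cases ht : t ∈ Ioi n
        · have := h t (hTn.trans (le_of_lt ht))
          simp only
          gcongr
        · simp [hq0 t ht]
    rw [integral_add i2.integrableOn (i1.const_mul r).integrableOn, integral_const_mul] at hnum
    have hmem : muSL L ≤ (∫ t in Ioi L, (deriv q t ^ 2 + lamR t * q t ^ 2)) /
        ∫ t in Ioi L, q t ^ 2 := by
      refine csInf_le ⟨0, ?_⟩ ⟨q, hqc, i1.integrableOn, i2.integrableOn, hpos.ne', rfl⟩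
      rintro _ ⟨p, -, -, -, -, rfl⟩
      exact div_nonneg (integral_nonneg fun t =>
        add_nonneg (sq_nonneg _) (mul_nonneg (lamR_nonneg t) (sq_nonneg _)))
        (integral_nonneg fun t => sq_nonneg _)
    refine hmem.trans ((div_le_div_of_nonneg_right hnum hpos.le).trans (le_of_eq ?_))
    rw [add_div, mul_div_assoc, div_self hpos.ne', mul_one, v2, v1, hC]
    have := hbpos.ne'
    field_simp
  have hlim : Filter.Tendsto (fun n : ℝ => C / n ^ 2 + r) Filter.atTop (nhds (0 + r)) :=
    (Filter.Tendsto.const_div_atTop (Filter.tendsto_pow_atTop two_ne_zero) C).add_const r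
  rw [zero_add] at hlim
  refine ge_of_tendsto hlim ?_
  filter_upwards [Filter.eventually_ge_atTop (1 + |L| + |T|)] with n hn
  exact key n hn

lemma muSL_le_lamG (L : ℝ) : muSL L ≤ lamG := by
  refine le_csInf ?_ ?_
  · obtain ⟨u, hu, hc, hs, h0⟩ := exists_square_bump
    refine ⟨_, u, hu, hc, hs.trans inter_subset_left, ?_, rfl⟩
    refine integral_sq_ne_zero isOpen_Gam hu.continuous ?_ (center_mem_GamR le_rfl).1 h0
    exact ((hu.continuous.pow 2).integrable_of_hasCompactSupport (by
      simpa [pow_two] using hc.mul_right (f' := u))).integrableOn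
  · rintro r ⟨u, hu, hc, hs, hne, rfl⟩
    obtain ⟨T, hT⟩ := lamR_le_of_trial hu hc hs hne
    exact muSL_le_of_eventually_le hT

/-- Lemma 3.7 ii & iii: (a) for every `L ≥ 0`, any `L²`-eigenvalue
`μ` of the Sturm–Liouville operator `q ↦ -q'' + λ q` on `(L,∞)` with Neumann condition
`q'(L) = 0` and potential `λ(t) = λ₁(Γ_t)` satisfies `μ > λ(L)`; (b) for every
`L > −1`, the ground energy satisfies `μ(L) ≤ λ₁(Γ)`. -/
theorem sturm_liouville_bounds :
    (∀ L : ℝ, 0 ≤ L → ∀ (μ : ℝ) (q : ℝ → ℝ), ContDiff ℝ 2 q →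
      (∀ t ∈ Set.Ioi L, -(deriv (deriv q) t) + lamR t * q t = μ * q t) →
      deriv q L = 0 →
      IntegrableOn (fun t => (q t) ^ 2) (Set.Ioi L) →
      IntegrableOn (fun t => (deriv q t) ^ 2) (Set.Ioi L) →
      (∃ t ∈ Set.Ici L, q t ≠ 0) →
      lamR L < μ) ∧
    (∀ L : ℝ, -1 < L → muSL L ≤ lamG) := by
  exact ⟨fun L hL μ q hq heq hN hi _ hne => eigenvalue_gt hL hq heq hN hi hne,
    fun L _ => muSL_le_lamG L⟩
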